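/- Suppose f satisfies α F(u) ≤ u f(u) + β u² + α θ for all u > 0, where F(u) := ∫₀^u f(s) ds, for some α > 2, 0 < β ≤ λ₁(α − 2)/2 and θ > 0. Let u be a positive classical solution of the pseudo-parabolic problem and define 𝓕(t) := −(1/2)∫_D |∇_γ u(t)|² dxdy + ∫_D (F(u(t)) − θ) dxdy. Then for all t > 0 in the interval of existence, d/dt ∫_D (u(t)² + |∇_γ u(t)|²) dxdy ≥ 2α 𝓕(t). -/

import Mathlib

open MeasureTheory Real Set Filter
open scoped ENNReal

noncomputable section

/-- The Baouendi–Grushin space `ℝ^m × ℝ^k`. -/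
abbrev GS (m k : ℕ) := EuclideanSpace ℝ (Fin m) × EuclideanSpace ℝ (Fin k)

/-- Unit coordinate vector in the `i`-th `x`-direction. -/
def eX (m k : ℕ) (i : Fin m) : GS m k := (EuclideanSpace.single i (1 : ℝ), 0)

/-- Unit coordinate vector in the `j`-th `y`-direction. -/
def eY (m k : ℕ) (j : Fin k) : GS m k := (0, EuclideanSpace.single j (1 : ℝ))

/-- Squared length `|∇_γ v|²` of the Baouendi–Grushin gradient
`∇_γ v = (∇_x v, |x|^γ ∇_y v)`. -/
def gradSqG {m k : ℕ} (γ : ℝ) (v : GS m k → ℝ) (z : GS m k) : ℝ :=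
  (∑ i, (fderiv ℝ v z (eX m k i)) ^ 2) +
    ‖z.1‖ ^ (2 * γ) * ∑ j, (fderiv ℝ v z (eY m k j)) ^ 2

/-- Pointwise inner product `∇_γ v · ∇_γ w` of Baouendi–Grushin gradients. -/
def dotG {m k : ℕ} (γ : ℝ) (v w : GS m k → ℝ) (z : GS m k) : ℝ :=
  (∑ i, fderiv ℝ v z (eX m k i) * fderiv ℝ w z (eX m k i)) +
    ‖z.1‖ ^ (2 * γ) * ∑ j, fderiv ℝ v z (eY m k j) * fderiv ℝ w z (eY m k j)

/-- The Baouendi–Grushin operator `Δ_γ v = Δ_x v + |x|^{2γ} Δ_y v`. -/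
def lapG {m k : ℕ} (γ : ℝ) (v : GS m k → ℝ) (z : GS m k) : ℝ :=
  (∑ i, fderiv ℝ (fun w => fderiv ℝ v w (eX m k i)) z (eX m k i)) +
    ‖z.1‖ ^ (2 * γ) * ∑ j, fderiv ℝ (fun w => fderiv ℝ v w (eY m k j)) z (eY m k j)

/-- The antiderivative `F(x) = ∫₀ˣ f(s) ds`. -/
def Fprim (f : ℝ → ℝ) (x : ℝ) : ℝ := ∫ s in (0 : ℝ)..x, f s

/-- A domain as in the paper: bounded, open, connected, and such that `D` minus the
degeneracy set `{(x,y) ∈ closure D : x = 0}` consists of only one connected component. -/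
structure GoodDomain (m k : ℕ) (D : Set (GS m k)) : Prop where
  isOpen : IsOpen D
  isConnected : IsConnected D
  isBounded : Bornology.IsBounded D
  conn_off_degeneracy : IsConnected (D \ {z : GS m k | z ∈ closure D ∧ z.1 = 0})

/-- `D` supports the divergence formula: Green's first identity for `Δ_γ` holds for smooth
functions, the first of which vanishes on `∂D`. -/
def SupportsDivFormula {m k : ℕ} (γ : ℝ) (D : Set (GS m k)) : Prop :=
  ∀ v w : GS m k → ℝ, ContDiff ℝ (⊤ : ℕ∞) v → ContDiff ℝ (⊤ : ℕ∞) w →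
    (∀ z ∈ frontier D, v z = 0) →
    ∫ z in D, v z * lapG γ w z = -∫ z in D, dotG γ v w z

/-- The nonlinearity `f`: locally Lipschitz on `ℝ`, `f(0) = 0`, and `f(u) > 0` for `u > 0`. -/
structure GoodNonlinearity (f : ℝ → ℝ) : Prop where
  locallyLipschitz : LocallyLipschitz f
  zero : f 0 = 0
  pos : ∀ s : ℝ, 0 < s → 0 < f s

/-- The initial datum `u₀`: of class `C¹`, non-negative and non-trivial on `closure D`,
vanishing on `∂D`. -/
structure GoodInitialData {m k : ℕ} (D : Set (GS m k)) (u₀ : GS m k → ℝ) : Prop where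
  contDiff : ContDiff ℝ 1 u₀
  nonneg : ∀ z ∈ closure D, 0 ≤ u₀ z
  nontrivial : ∃ z ∈ D, u₀ z ≠ 0
  bdry : ∀ z ∈ frontier D, u₀ z = 0

/-- A positive classical solution `u` of the pseudo-parabolic problem
`u_t − Δ_γ u_t − Δ_γ u = f(u)` in `D × (0,T)`, `u = 0` on `∂D × (0,T)`, `u(0) = u₀`
on `closure D`, where `T ∈ (0,∞]` is the interval of existence; `u` is smooth enough
that all derivatives exist. -/
structure IsPosSolution {m k : ℕ} (γ : ℝ) (D : Set (GS m k)) (f : ℝ → ℝ)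
    (u₀ : GS m k → ℝ) (T : ℝ≥0∞) (u : ℝ → GS m k → ℝ) : Prop where
  smooth : ContDiff ℝ (⊤ : ℕ∞) (fun p : ℝ × GS m k => u p.1 p.2)
  pos : ∀ t : ℝ, 0 < t → ENNReal.ofReal t < T → ∀ z ∈ D, 0 < u t z
  eqn : ∀ t : ℝ, 0 < t → ENNReal.ofReal t < T → ∀ z ∈ D,
    deriv (fun s => u s z) t
      - lapG γ (fun w => deriv (fun s => u s w) t) z
      - lapG γ (u t) z = f (u t z)
  bdry : ∀ t : ℝ, 0 < t → ENNReal.ofReal t < T → ∀ z ∈ frontier D, u t z = 0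
  init : ∀ z ∈ closure D, u 0 z = u₀ z

/-!
Multiplying the equation by `u`, integrating over `D` and applying Green's identity to both
`Δ_γ u_t` and `Δ_γ u` gives the energy identity
`d/dt ∫ (u² + |∇_γ u|²) = 2 ∫ (u u_t + ∇_γ u · ∇_γ u_t) = 2 ∫ u f(u) - 2 ∫ |∇_γ u|²`.
The growth condition bounds `∫ u f(u)` from below by `α ∫ (F(u) - θ) - β ∫ u²`, and the Poincaré
inequality absorbs `β ∫ u²` into `(α - 2) / 2 ∫ |∇_γ u|²`, which leaves exactly `2 α 𝓕`.
-/

section TimeDerivative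

variable {E F : Type*} [NormedAddCommGroup E] [NormedSpace ℝ E]
  [NormedAddCommGroup F] [NormedSpace ℝ F]

/-- The partial derivative `u_t` of a time-dependent function `u`, curried like `u` itself so that
`timeDeriv u t` is again a function of the space variable. -/
def timeDeriv (u : ℝ → E → F) (t : ℝ) (z : E) : F := deriv (fun s => u s z) t

variable {u : ℝ → E → F}

theorem hasDerivAt_timeDeriv (hu : Differentiable ℝ (Function.uncurry u)) (t : ℝ) (z : E) :
    HasDerivAt (fun s => u s z) (timeDeriv u t z) t :=
  (hu.comp (differentiable_id.prodMk (differentiable_const z)) t).hasDerivAt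

theorem timeDeriv_eq_fderiv_uncurry (hu : Differentiable ℝ (Function.uncurry u)) (t : ℝ) (z : E) :
    timeDeriv u t z = fderiv ℝ (Function.uncurry u) (t, z) (1, 0) := by
  have hasDerivAt_line : HasDerivAt (fun s : ℝ => (s, z)) (1, 0) t :=
    (hasDerivAt_id t).prodMk (hasDerivAt_const t z)
  exact ((hu (t, z)).hasFDerivAt.comp_hasDerivAt t hasDerivAt_line).deriv

theorem contDiff_uncurry_timeDeriv {n : WithTop ℕ∞}
    (hu : ContDiff ℝ (n + 1) (Function.uncurry u)) :
    ContDiff ℝ n (Function.uncurry (timeDeriv u)) := by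
  have timeDeriv_eq : Function.uncurry (timeDeriv u) =
      fun p => fderiv ℝ (Function.uncurry u) p (1, 0) :=
    funext fun p => timeDeriv_eq_fderiv_uncurry (hu.differentiable (by simp)) p.1 p.2
  rw [timeDeriv_eq]
  exact (hu.fderiv_right le_rfl).clm_apply contDiff_const

theorem fderiv_curried_eq_comp_inr (hu : Differentiable ℝ (Function.uncurry u)) (t : ℝ) (z : E) :
    fderiv ℝ (u t) z =
      (fderiv ℝ (Function.uncurry u) (t, z)).comp (ContinuousLinearMap.inr ℝ ℝ E) :=
  ((hu (t, z)).hasFDerivAt.comp z (hasFDerivAt_prodMk_right t z)).fderiv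

theorem hasDerivAt_fderiv_timeDeriv (hu : ContDiff ℝ 2 (Function.uncurry u)) (t : ℝ) (z : E) :
    HasDerivAt (fun s => fderiv ℝ (u s) z) (fderiv ℝ (timeDeriv u t) z) t := by
  set U := Function.uncurry u
  have hU : Differentiable ℝ U := hu.differentiable (by simp)
  have hdU : HasFDerivAt (fderiv ℝ U) (fderiv ℝ (fderiv ℝ U) (t, z)) (t, z) :=
    ((hu.fderiv_right (m := 1) (by norm_num)).differentiable (by simp) _).hasFDerivAt
  have hasDerivAt_time : HasDerivAt (fun s => fderiv ℝ U (s, z))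
      (fderiv ℝ (fderiv ℝ U) (t, z) (1, 0)) t :=
    hdU.comp_hasDerivAt t ((hasDerivAt_id t).prodMk (hasDerivAt_const t z))
  have hasFDerivAt_space : HasFDerivAt (fun w => fderiv ℝ U (t, w))
      ((fderiv ℝ (fderiv ℝ U) (t, z)).comp (ContinuousLinearMap.inr ℝ ℝ E)) z :=
    hdU.comp z (hasFDerivAt_prodMk_right t z)
  have fderiv_timeDeriv : fderiv ℝ (timeDeriv u t) z =
      (fderiv ℝ (fderiv ℝ U) (t, z) (1, 0)).comp (ContinuousLinearMap.inr ℝ ℝ E) := by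
    rw [funext (timeDeriv_eq_fderiv_uncurry hU t),
      (hasFDerivAt_space.clm_apply (hasFDerivAt_const _ z)).fderiv]
    ext e
    simpa using hu.contDiffAt.isSymmSndFDerivAt (by simp) (0, e) (1, 0)
  rw [fderiv_timeDeriv, funext fun s => fderiv_curried_eq_comp_inr hU s z]
  simpa using hasDerivAt_time.clm_comp (hasDerivAt_const t (ContinuousLinearMap.inr ℝ ℝ E))

end TimeDerivative

theorem continuous_Fprim {f : ℝ → ℝ} (hf : Continuous f) : Continuous (Fprim f) :=
  intervalIntegral.continuous_primitive (fun a b => hf.intervalIntegrable a b) 0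

section BoundedDomain

variable {X E : Type*} [MetricSpace X] [ProperSpace X] [MeasurableSpace X]
  [OpensMeasurableSpace X] {μ : Measure X} [IsFiniteMeasureOnCompacts μ]
  [NormedAddCommGroup E] {D : Set X}

theorem integrableOn_of_continuous_of_isBounded (hD : Bornology.IsBounded D) {g : X → E}
    (hg : Continuous g) : IntegrableOn g D μ :=
  (hg.continuousOn.integrableOn_compact hD.isCompact_closure).mono_set subset_closure

theorem hasDerivAt_setIntegral_of_continuous [NormedSpace ℝ E] (hD : Bornology.IsBounded D)
    {G G' : ℝ → X → E} (hG : ∀ s, Continuous (G s)) (hG' : Continuous (Function.uncurry G'))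
    (hderiv : ∀ s z, HasDerivAt (fun r => G r z) (G' s z) s) (t : ℝ) :
    HasDerivAt (fun s => ∫ z in D, G s z ∂μ) (∫ z in D, G' t z ∂μ) t := by
  obtain ⟨C, hC⟩ := (isCompact_Icc (a := t - 1) (b := t + 1)).prod hD.isCompact_closure
    |>.exists_bound_of_continuousOn hG'.continuousOn
  have norm_le : ∀ᵐ z ∂μ.restrict D, ∀ s ∈ Icc (t - 1) (t + 1), ‖G' s z‖ ≤ C :=
    ae_restrict_of_ae_restrict_of_subset subset_closure <|
      ae_restrict_of_forall_mem isClosed_closure.measurableSet fun z hz s hs => hC (s, z) ⟨hs, hz⟩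
  exact (hasDerivAt_integral_of_dominated_loc_of_deriv_le
    (Icc_mem_nhds (by linarith) (by linarith))
    (Eventually.of_forall fun s => (hG s).aestronglyMeasurable)
    (integrableOn_of_continuous_of_isBounded hD (hG t))
    (hG'.uncurry_left t).aestronglyMeasurable norm_le
    (integrableOn_of_continuous_of_isBounded hD continuous_const)
    (Eventually.of_forall fun z s _ => hderiv s z)).2

theorem mul_setIntegral_Fprim_sub_le (hDm : MeasurableSet D) (hD : Bornology.IsBounded D)
    {f : ℝ → ℝ} (hf : Continuous f) {v : X → ℝ} (hv : Continuous v) {α β θ : ℝ}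
    (hgrowth : ∀ z ∈ D, α * Fprim f (v z) ≤ v z * f (v z) + β * v z ^ 2 + α * θ) :
    α * ∫ z in D, (Fprim f (v z) - θ) ∂μ ≤
      (∫ z in D, v z * f (v z) ∂μ) + β * ∫ z in D, v z ^ 2 ∂μ := by
  have integrable_source : IntegrableOn (fun z => v z * f (v z)) D μ :=
    integrableOn_of_continuous_of_isBounded hD (hv.mul (hf.comp hv))
  have integrable_sq : IntegrableOn (fun z => β * v z ^ 2) D μ :=
    integrableOn_of_continuous_of_isBounded hD (by fun_prop)
  have integrable_Fprim : IntegrableOn (fun z => α * (Fprim f (v z) - θ)) D μ :=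
    integrableOn_of_continuous_of_isBounded hD
      ((((continuous_Fprim hf).comp hv).sub continuous_const).const_mul α)
  rw [← integral_const_mul, ← integral_const_mul, ← integral_add integrable_source integrable_sq]
  refine setIntegral_mono_on integrable_Fprim (integrable_source.add integrable_sq) hDm
    fun z hz => ?_
  linarith [hgrowth z hz]

end BoundedDomain

section Grushin

variable {m k : ℕ} {γ : ℝ}

theorem continuous_norm_fst_rpow (hγ : 0 ≤ γ) :
    Continuous fun z : GS m k => ‖z.1‖ ^ (2 * γ) :=
  continuous_fst.norm.rpow_const fun _ => Or.inr (by positivity)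

theorem gradSqG_eq_dotG_self (γ : ℝ) (v : GS m k → ℝ) : gradSqG γ v = dotG γ v v := by
  funext z
  simp only [gradSqG, dotG, pow_two]

theorem continuous_uncurry_dotG {P : Type*} [NormedAddCommGroup P] [NormedSpace ℝ P] (hγ : 0 ≤ γ)
    {v w : P → GS m k → ℝ} (hv : ContDiff ℝ 1 (Function.uncurry v))
    (hw : ContDiff ℝ 1 (Function.uncurry w)) :
    Continuous (Function.uncurry fun p => dotG γ (v p) (w p)) := by
  have continuous_fderiv_apply {g : P → GS m k → ℝ} (hg : ContDiff ℝ 1 (Function.uncurry g))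
      (e : GS m k) : Continuous fun q : P × GS m k => fderiv ℝ (g q.1) q.2 e := by
    have hg_param : ContDiff ℝ 1 (Function.uncurry fun q : P × GS m k => g q.1) :=
      hg.comp ((contDiff_fst.comp contDiff_fst).prodMk contDiff_snd)
    exact (hg_param.fderiv (n := 0) contDiff_snd (by simp)).continuous.clm_apply continuous_const
  have continuous_fderiv_mul (e : GS m k) :=
    (continuous_fderiv_apply hv e).mul (continuous_fderiv_apply hw e)
  exact (continuous_finsetSum _ fun i _ => continuous_fderiv_mul _).add
    (((continuous_norm_fst_rpow hγ).comp continuous_snd).mul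
      (continuous_finsetSum _ fun j _ => continuous_fderiv_mul _))

theorem continuous_dotG (hγ : 0 ≤ γ) {v w : GS m k → ℝ} (hv : ContDiff ℝ 1 v)
    (hw : ContDiff ℝ 1 w) : Continuous (dotG γ v w) :=
  (continuous_uncurry_dotG (P := ℝ) (v := fun _ => v) (w := fun _ => w) hγ
    (hv.comp contDiff_snd) (hw.comp contDiff_snd)).uncurry_left 0

theorem continuous_lapG (hγ : 0 ≤ γ) {v : GS m k → ℝ} (hv : ContDiff ℝ 2 v) :
    Continuous (lapG γ v) := by
  have continuous_snd_deriv (e : GS m k) :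
      Continuous fun z => fderiv ℝ (fun w => fderiv ℝ v w e) z e :=
    (((hv.fderiv_right (m := 1) (by norm_num)).clm_apply contDiff_const).continuous_fderiv
      (by simp)).clm_apply continuous_const
  exact (continuous_finsetSum _ fun i _ => continuous_snd_deriv _).add
    ((continuous_norm_fst_rpow hγ).mul (continuous_finsetSum _ fun j _ => continuous_snd_deriv _))

theorem hasDerivAt_gradSqG {u : ℝ → GS m k → ℝ} (hu : ContDiff ℝ 2 (Function.uncurry u))
    (t : ℝ) (z : GS m k) :
    HasDerivAt (fun s => gradSqG γ (u s) z) (2 * dotG γ (u t) (timeDeriv u t) z) t := by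
  have hasDerivAt_sq (e : GS m k) : HasDerivAt (fun s => fderiv ℝ (u s) z e ^ 2)
      (2 * (fderiv ℝ (u t) z e * fderiv ℝ (timeDeriv u t) z e)) t := by
    have hasDerivAt_apply := (hasDerivAt_fderiv_timeDeriv hu t z).clm_apply (hasDerivAt_const t e)
    refine (hasDerivAt_apply.pow 2).congr_deriv ?_
    simp [mul_assoc]
  refine ((HasDerivAt.fun_sum fun i _ => hasDerivAt_sq (eX m k i)).add
    ((HasDerivAt.fun_sum fun j _ => hasDerivAt_sq (eY m k j)).const_mul
      (‖z.1‖ ^ (2 * γ)))).congr_deriv ?_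
  simp only [dotG, ← Finset.mul_sum]
  ring

variable {D : Set (GS m k)}

theorem hasDerivAt_setIntegral_sq_add_gradSqG (hγ : 0 ≤ γ) (hD : Bornology.IsBounded D)
    {u : ℝ → GS m k → ℝ} (hu : ContDiff ℝ 2 (Function.uncurry u)) (t : ℝ) :
    HasDerivAt (fun s => ∫ z in D, (u s z ^ 2 + gradSqG γ (u s) z))
      (2 * ∫ z in D, (u t z * timeDeriv u t z + dotG γ (u t) (timeDeriv u t) z)) t := by
  have hu_one : ContDiff ℝ 1 (Function.uncurry u) := hu.of_le (by norm_num)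
  have hut : ContDiff ℝ 1 (Function.uncurry (timeDeriv u)) := contDiff_uncurry_timeDeriv hu
  have hus (s : ℝ) : ContDiff ℝ 1 (u s) := hu_one.comp (contDiff_prodMk_right s)
  rw [← integral_const_mul]
  refine hasDerivAt_setIntegral_of_continuous hD
    (G' := fun s z => 2 * (u s z * timeDeriv u s z + dotG γ (u s) (timeDeriv u s) z)) (fun s => ?_)
    (((hu_one.continuous.mul hut.continuous).add
      (continuous_uncurry_dotG hγ hu_one hut)).const_mul 2) (fun s z => ?_) t
  · rw [gradSqG_eq_dotG_self]
    exact ((hus s).continuous.pow 2).add (continuous_dotG hγ (hus s) (hus s))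
  · refine (((hasDerivAt_timeDeriv (hu.differentiable (by simp)) s z).pow 2).add
      (hasDerivAt_gradSqG hu s z)).congr_deriv ?_
    ring

theorem setIntegral_mul_add_dotG_eq (hγ : 0 ≤ γ) (hDm : MeasurableSet D)
    (hD : Bornology.IsBounded D) (hDiv : SupportsDivFormula γ D) {v w g : GS m k → ℝ}
    (hv : ContDiff ℝ (⊤ : ℕ∞) v) (hw : ContDiff ℝ (⊤ : ℕ∞) w) (hbdry : ∀ z ∈ frontier D, v z = 0)
    (heqn : ∀ z ∈ D, w z - lapG γ w z - lapG γ v z = g z) :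
    ∫ z in D, (v z * w z + dotG γ v w z) =
      (∫ z in D, v z * g z) - ∫ z in D, gradSqG γ v z := by
  have integrable_mul : IntegrableOn (fun z => v z * w z) D :=
    integrableOn_of_continuous_of_isBounded hD (hv.continuous.mul hw.continuous)
  have integrable_dotG : IntegrableOn (dotG γ v w) D :=
    integrableOn_of_continuous_of_isBounded hD
      (continuous_dotG hγ (contDiff_infty.1 hv 1) (contDiff_infty.1 hw 1))
  have integrable_mul_lapG {h : GS m k → ℝ} (hh : ContDiff ℝ (⊤ : ℕ∞) h) :
      IntegrableOn (fun z => v z * lapG γ h z) D :=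
    integrableOn_of_continuous_of_isBounded hD
      (hv.continuous.mul (continuous_lapG hγ (contDiff_infty.1 hh 2)))
  have integral_source : ∫ z in D, v z * g z =
      (∫ z in D, v z * w z) + (∫ z in D, dotG γ v w z) + ∫ z in D, gradSqG γ v z :=
    calc ∫ z in D, v z * g z
        = ∫ z in D, (v z * w z - v z * lapG γ w z - v z * lapG γ v z) :=
          setIntegral_congr_fun hDm fun z hz => by
            simp only [← heqn z hz]
            ring
      _ = (∫ z in D, v z * w z) - (∫ z in D, v z * lapG γ w z) - ∫ z in D, v z * lapG γ v z := by
          rw [← integral_sub integrable_mul (integrable_mul_lapG hw)]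
          exact integral_sub (integrable_mul.sub (integrable_mul_lapG hw)) (integrable_mul_lapG hv)
      _ = _ := by
          rw [hDiv v w hv hw hbdry, hDiv v v hv hv hbdry, gradSqG_eq_dotG_self]
          ring
  rw [integral_add integrable_mul integrable_dotG, integral_source]
  ring

theorem grushin_differential_inequality_general (hγ : 0 ≤ γ) (hDm : MeasurableSet D)
    (hD : Bornology.IsBounded D) (hDiv : SupportsDivFormula γ D) {f : ℝ → ℝ} (hf : Continuous f)
    {α β θ lam1 : ℝ} (hα : 2 ≤ α) (hβ : β ≤ lam1 * (α - 2) / 2) {u : ℝ → GS m k → ℝ} {t : ℝ}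
    (hu : ContDiff ℝ (⊤ : ℕ∞) (Function.uncurry u))
    (heqn : ∀ z ∈ D,
      timeDeriv u t z - lapG γ (timeDeriv u t) z - lapG γ (u t) z = f (u t z))
    (hbdry : ∀ z ∈ frontier D, u t z = 0)
    (hPoincare : lam1 * ∫ z in D, u t z ^ 2 ≤ ∫ z in D, gradSqG γ (u t) z)
    (hgrowth : ∀ z ∈ D,
      α * Fprim f (u t z) ≤ u t z * f (u t z) + β * u t z ^ 2 + α * θ) :
    ∃ d : ℝ,
      HasDerivAt (fun s => ∫ z in D, (u s z ^ 2 + gradSqG γ (u s) z)) d t ∧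
      2 * α * (-(1 / 2) * (∫ z in D, gradSqG γ (u t) z)
        + ∫ z in D, (Fprim f (u t z) - θ)) ≤ d := by
  have hut : ContDiff ℝ (⊤ : ℕ∞) (u t) := hu.comp (contDiff_prodMk_right t)
  have hdut : ContDiff ℝ (⊤ : ℕ∞) (timeDeriv u t) :=
    (contDiff_uncurry_timeDeriv (hu.of_le (by simp))).comp (contDiff_prodMk_right t)
  refine ⟨_, hasDerivAt_setIntegral_sq_add_gradSqG hγ hD (contDiff_infty.1 hu 2) t, ?_⟩
  have source_lower_bound :=
    mul_setIntegral_Fprim_sub_le (μ := volume) hDm hD hf hut.continuous hgrowth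
  have poincare_absorption : β * ∫ z in D, u t z ^ 2 ≤
      (α - 2) / 2 * ∫ z in D, gradSqG γ (u t) z :=
    calc β * ∫ z in D, u t z ^ 2
        ≤ lam1 * (α - 2) / 2 * ∫ z in D, u t z ^ 2 :=
          mul_le_mul_of_nonneg_right hβ (integral_nonneg fun z => sq_nonneg _)
      _ = (α - 2) / 2 * (lam1 * ∫ z in D, u t z ^ 2) := by ring
      _ ≤ _ := mul_le_mul_of_nonneg_left hPoincare (by linarith)
  rw [setIntegral_mul_add_dotG_eq hγ hDm hD hDiv hut hdut hbdry heqn]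
  linarith

end Grushin

/-- **Differential inequality for blow-up.** Under the growth condition
`α F(u) ≤ u f(u) + β u² + α θ` with `α > 2`, `0 < β ≤ λ₁(α−2)/2`, `θ > 0`, for a
positive classical solution `u` of the pseudo-parabolic problem one has
`d/dt ∫_D (u² + |∇_γ u|²) ≥ 2α 𝓕(t)` for every `t > 0` in the interval of existence,
where `𝓕(t) := −(1/2)∫_D |∇_γ u(t)|² + ∫_D (F(u(t)) − θ)`. -/
theorem grushin_differential_inequality
    (m k : ℕ) (hm : 1 ≤ m) (hk : 1 ≤ k) (γ : ℝ) (hγ : 0 ≤ γ)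
    (D : Set (GS m k)) (hD : GoodDomain m k D) (hDiv : SupportsDivFormula γ D)
    (f : ℝ → ℝ) (hf : GoodNonlinearity f)
    (α β θ lam1 : ℝ) (hα : 2 < α) (hβpos : 0 < β) (hβ : β ≤ lam1 * (α - 2) / 2)
    (hθ : 0 < θ) (hlam1 : 0 < lam1)
    (hPoincare : ∀ v : GS m k → ℝ, ContDiff ℝ 1 v → (∀ z ∈ frontier D, v z = 0) →
      lam1 * ∫ z in D, (v z) ^ 2 ≤ ∫ z in D, gradSqG γ v z)
    (hgrowth : ∀ s : ℝ, 0 < s → α * Fprim f s ≤ s * f s + β * s ^ 2 + α * θ)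
    (u₀ : GS m k → ℝ) (T : ℝ≥0∞) (hT : 0 < T) (u : ℝ → GS m k → ℝ)
    (hu : IsPosSolution γ D f u₀ T u) :
    ∀ t : ℝ, 0 < t → ENNReal.ofReal t < T →
      ∃ d : ℝ,
        HasDerivAt (fun s => ∫ z in D, ((u s z) ^ 2 + gradSqG γ (u s) z)) d t ∧
        2 * α * (-(1 / 2) * (∫ z in D, gradSqG γ (u t) z)
          + ∫ z in D, (Fprim f (u t z) - θ)) ≤ d := by
  intro t ht htT
  have hut : ContDiff ℝ 1 (u t) :=
    contDiff_infty.1 (hu.smooth.comp (contDiff_prodMk_right t)) 1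
  exact grushin_differential_inequality_general hγ hD.isOpen.measurableSet hD.isBounded hDiv
    hf.locallyLipschitz.continuous hα.le hβ hu.smooth (hu.eqn t ht htT) (hu.bdry t ht htT)
    (hPoincare (u t) hut (hu.bdry t ht htT)) fun z hz => hgrowth _ (hu.pos t ht htT z hz)
end
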